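/- Let U be Haar-random on U(2^N) with N = N_S + N_A, and define the tomographic ensemble states |φ_m⟩ = (I_S ⊗ ⟨0|_A) U† |m⟩ / √q_m with probabilities q_m = Tr[F_m]/d_S. Then the pair (q_m, |φ_m⟩) has the property that the conditional distribution of |φ_m⟩ given q_m is invariant under every unitary U_S on H_S, and hence equals the Haar (unitarily invariant) measure on unit vectors of H_S; consequently 𝔼_U ∑_m q_m (|φ_m⟩⟨φ_m|)^{⊗k} equals the k-th moment of the Haar ensemble. -/

import Mathlib

open Matrix MeasureTheory
open scoped ComplexConjugate

instance matrixMeasurableSpace {m n α : Type*} [MeasurableSpace α] :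
    MeasurableSpace (Matrix m n α) :=
  inferInstanceAs (MeasurableSpace (m → n → α))

/-- The permutation operator `π_σ` on the `k`-fold tensor power of `ℂ^{d_S}`. -/
def permOp (dS k : ℕ) (σ : Equiv.Perm (Fin k)) :
    Matrix (Fin k → Fin dS) (Fin k → Fin dS) ℂ :=
  Matrix.of fun i j => if i = j ∘ σ then 1 else 0

/-!
Let `T` be the averaged moment. Right invariance makes `T` commute with the tensor powers
`V^{⊗k}` of all unitaries `V` on the system. Diagonal phases then kill every entry of `T` between
words with different multisets of letters. Invariance under all `V` makes `x ↦ ⟨x^{⊗k}, T x^{⊗k}⟩`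
constant on unit vectors, hence equal to `C ‖x‖^{2k}`; as an identity between polynomials in the
`|x_a|²`, this says that all rows of `T` have the same sum. Since `T` is also symmetric under
permuting its row and column words separately, it is a multiple of `∑_σ π_σ`, and `Tr T = 1`
determines the factor.
-/

open ProbabilityTheory
open scoped Kronecker

section WordContent

variable {ι S : Type*} [Fintype ι]

/-- The content of a word `i : ι → S`, i.e. the multiset of its letters. It is recorded as an
element of the symmetric power of `S`, so that the contents of words form a finite type. -/
def wordContent (i : ι → S) : Sym S (Fintype.card ι) :=
  ⟨Finset.univ.val.map i, by simp⟩

theorem coe_wordContent (i : ι → S) : (wordContent i : Multiset S) = Finset.univ.val.map i :=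
  rfl

theorem count_wordContent [DecidableEq S] (i : ι → S) (a : S) :
    (wordContent i : Multiset S).count a = Fintype.card {t // i t = a} := by
  rw [coe_wordContent, Multiset.count_map, Fintype.card_subtype]
  simp only [eq_comm, Finset.card_def, Finset.filter_val]

theorem prod_map_wordContent {R : Type*} [CommMonoid R] (i : ι → S) (x : S → R) :
    ((wordContent i : Multiset S).map x).prod = ∏ t, x (i t) := by
  rw [coe_wordContent, Multiset.map_map]
  rfl

theorem wordContent_comp (i : ι → S) (σ : Equiv.Perm ι) : wordContent (i ∘ σ) = wordContent i := by
  apply Sym.coe_injective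
  rw [coe_wordContent, coe_wordContent, ← Multiset.map_map, Multiset.map_univ_val_equiv]

theorem wordContent_eq_iff {i j : ι → S} :
    wordContent i = wordContent j ↔ ∃ σ : Equiv.Perm ι, i = j ∘ σ := by
  classical
  refine ⟨fun h => ?_, fun ⟨σ, hσ⟩ => hσ ▸ wordContent_comp j σ⟩
  have fiberEquiv (a : S) : {t // i t = a} ≃ {t // j t = a} :=
    Fintype.equivOfCardEq (by rw [← count_wordContent i, h, count_wordContent])
  exact ⟨Equiv.ofFiberEquiv fiberEquiv, funext fun t => (Equiv.ofFiberEquiv_map _ t).symm⟩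

theorem wordContent_surjective : Function.Surjective (wordContent : (ι → S) → _) := by
  classical
  intro s
  have e : ι ≃ (s : Multiset S) := Fintype.equivOfCardEq (by simp)
  refine ⟨fun t => (e t).1, Sym.coe_injective ?_⟩
  calc Finset.univ.val.map (fun t => (e t).1)
      = (Finset.univ.val.map e).map fun x => x.1 := (Multiset.map_map _ _ _).symm
    _ = s := by rw [Multiset.map_univ_val_equiv, Multiset.map_univ_coe]

end WordContent

section KroneckerPower

variable {l m n S R : Type*} (ι : Type*) [Fintype ι]

/-- The tensor power `M^{⊗ι}` of a matrix, with rows and columns indexed by words. -/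
def kroneckerPow [CommMonoid R] (M : Matrix m n R) : Matrix (ι → m) (ι → n) R :=
  of fun i j => ∏ t, M (i t) (j t)

@[simp]
theorem kroneckerPow_apply [CommMonoid R] (M : Matrix m n R) (i : ι → m) (j : ι → n) :
    kroneckerPow ι M i j = ∏ t, M (i t) (j t) :=
  rfl

theorem kroneckerPow_mul [DecidableEq ι] [Fintype m] [CommSemiring R]
    (M : Matrix l m R) (N : Matrix m n R) :
    kroneckerPow ι (M * N) = kroneckerPow ι M * kroneckerPow ι N := by
  ext i j
  simp only [kroneckerPow_apply, Matrix.mul_apply, Fintype.prod_sum, Finset.prod_mul_distrib]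

theorem kroneckerPow_conjTranspose [CommSemiring R] [StarRing R] (M : Matrix m n R) :
    kroneckerPow ι Mᴴ = (kroneckerPow ι M)ᴴ := by
  ext i j
  simp only [kroneckerPow_apply, conjTranspose_apply, star_prod]

theorem kroneckerPow_diagonal [DecidableEq S] [CommMonoidWithZero R] (f : S → R) :
    kroneckerPow ι (diagonal f) = diagonal fun i => ∏ t, f (i t) := by
  ext i j
  rcases eq_or_ne i j with rfl | h
  · simp
  · obtain ⟨t, ht⟩ := Function.ne_iff.1 h
    rw [diagonal_apply_ne _ h, kroneckerPow_apply]
    exact Finset.prod_eq_zero (Finset.mem_univ t) (diagonal_apply_ne _ ht)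

theorem trace_kroneckerPow [DecidableEq ι] [Fintype S] [CommSemiring R] (M : Matrix S S R) :
    (kroneckerPow ι M).trace = M.trace ^ Fintype.card ι := by
  simp only [trace, diag_apply, kroneckerPow_apply]
  rw [← Fintype.prod_sum fun (_ : ι) a => M a a, Finset.prod_const, Finset.card_univ]

theorem kroneckerPow_vecMulVec_comp [CommMonoid R] (v : m → R) (w : n → R)
    (i : ι → m) (j : ι → n) (σ τ : Equiv.Perm ι) :
    kroneckerPow ι (vecMulVec v w) (i ∘ σ) (j ∘ τ) = kroneckerPow ι (vecMulVec v w) i j := by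
  simp only [kroneckerPow_apply, vecMulVec_apply, Finset.prod_mul_distrib, Function.comp_apply]
  rw [Equiv.prod_comp σ fun t => v (i t), Equiv.prod_comp τ fun t => w (j t)]

end KroneckerPower

section Symmetrizer

variable {ι S R : Type*} [Fintype ι]

/-- The sum of the permutation operators on the `ι`-fold tensor power, which is `(card ι)!` times
the projection onto the symmetric subspace. -/
def symmetrizer (ι S R : Type*) [Fintype ι] [DecidableEq ι] [DecidableEq S]
    [AddCommMonoidWithOne R] : Matrix (ι → S) (ι → S) R :=
  of fun i j => ∑ σ : Equiv.Perm ι, if i = j ∘ σ then 1 else 0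

/-- A matrix indexed by words that vanishes between words of different contents and is constant on
the remaining blocks, one for each content. -/
structure IsContentBlock [Zero R] (A : Matrix (ι → S) (ι → S) R) : Prop where
  apply_eq_zero : ∀ {i j}, wordContent i ≠ wordContent j → A i j = 0
  apply_comp_comp : ∀ i j (σ τ : Equiv.Perm ι), A (i ∘ σ) (j ∘ τ) = A i j

theorem IsContentBlock.smul [MulZeroClass R] {A : Matrix (ι → S) (ι → S) R}
    (hA : IsContentBlock A) (c : R) : IsContentBlock (c • A) where
  apply_eq_zero h := by rw [Matrix.smul_apply, hA.apply_eq_zero h, smul_zero]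
  apply_comp_comp i j σ τ := by rw [Matrix.smul_apply, hA.apply_comp_comp, Matrix.smul_apply]

theorem isContentBlock_symmetrizer [DecidableEq ι] [DecidableEq S] [AddCommMonoidWithOne R] :
    IsContentBlock (symmetrizer ι S R) where
  apply_eq_zero h := Finset.sum_eq_zero fun σ _ =>
    if_neg fun hσ => h (wordContent_eq_iff.2 ⟨σ, hσ⟩)
  apply_comp_comp i j σ τ := by
    refine Fintype.sum_equiv ((Equiv.mulLeft τ).trans (Equiv.mulRight σ⁻¹)) _ _ fun ρ => ?_
    simp only [Equiv.trans_apply, Equiv.coe_mulLeft, Equiv.coe_mulRight]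
    exact if_congr (Equiv.eq_comp_symm σ i (j ∘ τ ∘ ρ)).symm rfl rfl

variable [Fintype S] [DecidableEq ι]

theorem sum_symmetrizer_apply [DecidableEq S] [AddCommMonoidWithOne R] (i : ι → S) :
    ∑ j, symmetrizer ι S R i j = ((Fintype.card ι).factorial : R) := by
  simp only [symmetrizer, of_apply]
  rw [Finset.sum_comm]
  have h (σ : Equiv.Perm ι) (j : ι → S) : i = j ∘ σ ↔ i ∘ σ.symm = j :=
    (Equiv.comp_symm_eq σ j i).symm
  simp [h, Fintype.card_perm]

theorem IsContentBlock.sum_filter_apply [DecidableEq S] [AddCommMonoid R]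
    {A : Matrix (ι → S) (ι → S) R} (hA : IsContentBlock A) (i : ι → S) :
    ∑ l with wordContent l = wordContent i, A i l = ∑ l, A i l :=
  Finset.sum_filter_of_ne fun _ _ hl => by_contra fun hne => hl (hA.apply_eq_zero (Ne.symm hne))

theorem IsContentBlock.sum_apply [DecidableEq S] [AddCommMonoid R]
    {A : Matrix (ι → S) (ι → S) R} (hA : IsContentBlock A) {i j : ι → S}
    (h : wordContent i = wordContent j) :
    ∑ l, A i l = Finset.card {l : ι → S | wordContent l = wordContent i} • A i j := by
  rw [← hA.sum_filter_apply]
  refine Finset.sum_eq_card_nsmul fun l hl => ?_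
  obtain ⟨σ, rfl⟩ := wordContent_eq_iff.1 ((Finset.mem_filter.1 hl).2.trans h)
  exact hA.apply_comp_comp i j 1 σ

theorem IsContentBlock.sum_filter_diag [DecidableEq S] [AddCommMonoid R]
    {A : Matrix (ι → S) (ι → S) R} (hA : IsContentBlock A) (i : ι → S) :
    ∑ l with wordContent l = wordContent i, A l l = ∑ l, A i l := by
  rw [← hA.sum_filter_apply]
  refine Finset.sum_congr rfl fun l hl => ?_
  obtain ⟨σ, rfl⟩ := wordContent_eq_iff.1 (Finset.mem_filter.1 hl).2
  exact hA.apply_comp_comp i (i ∘ σ) σ 1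

theorem IsContentBlock.ext_rowSum [AddCommMonoid R] [IsAddTorsionFree R]
    {A B : Matrix (ι → S) (ι → S) R} (hA : IsContentBlock A) (hB : IsContentBlock B)
    (h : ∀ i, ∑ j, A i j = ∑ j, B i j) : A = B := by
  classical
  ext i j
  by_cases hij : wordContent i = wordContent j
  · have hcard : Finset.card {l : ι → S | wordContent l = wordContent i} ≠ 0 :=
      Finset.card_ne_zero.2 ⟨i, by simp⟩
    apply nsmul_right_injective hcard
    simpa only [hA.sum_apply hij, hB.sum_apply hij] using h i
  · rw [hA.apply_eq_zero hij, hB.apply_eq_zero hij]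

theorem trace_symmetrizer [DecidableEq S] [CommSemiring R] :
    (symmetrizer ι S R).trace =
      ∏ t ∈ Finset.range (Fintype.card ι), ((Fintype.card S : R) + (t : R)) := by
  have sum_fiber (s : Sym S (Fintype.card ι)) :
      ∑ i : ι → S with wordContent i = s, symmetrizer ι S R i i =
        ((Fintype.card ι).factorial : R) := by
    obtain ⟨i₀, rfl⟩ := wordContent_surjective s
    rw [isContentBlock_symmetrizer.sum_filter_diag, sum_symmetrizer_apply]
  calc (symmetrizer ι S R).trace
      = ∑ s, ∑ i : ι → S with wordContent i = s, symmetrizer ι S R i i :=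
        (Finset.sum_fiberwise _ _ _).symm
    _ = ((Fintype.card S).ascFactorial (Fintype.card ι) : R) := by
      simp only [sum_fiber, Finset.sum_const, Finset.card_univ, Sym.card_sym_eq_multichoose,
        Nat.multichoose_eq, Nat.ascFactorial_eq_factorial_mul_choose', nsmul_eq_mul,
        Nat.cast_mul, mul_comm]
    _ = _ := by simp only [Nat.ascFactorial_eq_prod_range, Nat.cast_prod, Nat.cast_add]

end Symmetrizer

section Polynomial

theorem eq_zero_of_sum_mul_prod_eq_zero {ι S R : Type*} [Fintype ι] [DecidableEq ι] [Fintype S]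
    [CommRing R] [IsDomain R] [CharZero R] {s : Set R} (hs : s.Infinite) {c : (ι → S) → R}
    (hc : ∀ i (σ : Equiv.Perm ι), c (i ∘ σ) = c i)
    (h : ∀ y : S → R, (∀ b, y b ∈ s) → ∑ i, c i * ∏ t, y (i t) = 0) : c = 0 := by
  classical
  let exponent (i : ι → S) : S →₀ ℕ := Multiset.toFinsupp (wordContent i : Multiset S)
  let P : MvPolynomial S R := ∑ i, MvPolynomial.monomial (exponent i) (c i)
  have eval_P (y : S → R) : MvPolynomial.eval y P = ∑ i, c i * ∏ t, y (i t) := by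
    simp only [P, map_sum, MvPolynomial.eval_monomial, ← prod_map_wordContent,
      Finset.prod_multiset_map_count]
    rfl
  have P_eq_zero : P = 0 := MvPolynomial.funext_set (fun _ => s) (fun _ => hs) fun y hy => by
    rw [eval_P, h y fun b => hy b (Set.mem_univ b), map_zero]
  funext i
  have coeff_P : P.coeff (exponent i) =
      Finset.card {l : ι → S | wordContent l = wordContent i} • c i := by
    simp only [P, exponent, MvPolynomial.coeff_sum, MvPolynomial.coeff_monomial,
      EmbeddingLike.apply_eq_iff_eq, Sym.coe_inj, ← Finset.sum_filter]
    refine Finset.sum_eq_card_nsmul fun l hl => ?_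
    obtain ⟨σ, rfl⟩ := wordContent_eq_iff.1 (Finset.mem_filter.1 hl).2
    exact hc i σ
  rw [P_eq_zero, MvPolynomial.coeff_zero, eq_comm, smul_eq_zero] at coeff_P
  exact coeff_P.resolve_left (Finset.card_ne_zero.2 ⟨i, by simp⟩)

end Polynomial

section UnitVectors

variable {S : Type*} [Fintype S]

theorem star_dotProduct_self_eq_norm_sq (x : S → ℂ) :
    star x ⬝ᵥ x = (‖WithLp.toLp 2 x‖ : ℂ) ^ 2 := by
  have h := inner_self_eq_norm_sq_to_K (𝕜 := ℂ) (WithLp.toLp 2 x)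
  rwa [EuclideanSpace.inner_toLp_toLp, dotProduct_comm] at h

theorem exists_eq_smul_unit [Nonempty S] (x : S → ℂ) :
    ∃ (r : ℂ) (u : S → ℂ), star u ⬝ᵥ u = 1 ∧ x = r • u := by
  classical
  rcases eq_or_ne x 0 with rfl | hx
  · exact ⟨0, Pi.single (Classical.arbitrary S) 1, by simp, (zero_smul ℂ _).symm⟩
  · have hr : (‖WithLp.toLp 2 x‖ : ℂ) ≠ 0 := by simpa using hx
    refine ⟨_, (‖WithLp.toLp 2 x‖ : ℂ)⁻¹ • x, ?_, (smul_inv_smul₀ hr x).symm⟩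
    rw [star_smul, smul_dotProduct, dotProduct_smul, star_dotProduct_self_eq_norm_sq]
    simp only [Complex.star_def, map_inv₀, Complex.conj_ofReal, smul_eq_mul]
    field_simp

theorem exists_unitaryGroup_row_eq [DecidableEq S] (a : S) {x : S → ℂ} (hx : star x ⬝ᵥ x = 1) :
    ∃ U ∈ unitaryGroup S ℂ, U a = x := by
  have hv : Orthonormal ℂ (({a} : Set S).domRestrict fun _ => WithLp.toLp 2 x) := by
    refine ⟨fun _ => ?_, fun i j hij => absurd (Subsingleton.elim i j) hij⟩
    rw [star_dotProduct_self_eq_norm_sq] at hx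
    exact (pow_eq_one_iff_of_nonneg (norm_nonneg _) two_ne_zero).1 (by exact_mod_cast hx)
  obtain ⟨b, hb⟩ := hv.exists_orthonormalBasis_extension_of_card_eq (by simp)
  refine ⟨((EuclideanSpace.basisFun S ℂ).toBasis.toMatrix b)ᵀ, ?_, ?_⟩
  · exact transpose_mem_unitaryGroup_iff.2
      ((EuclideanSpace.basisFun S ℂ).toMatrix_orthonormalBasis_mem_unitary b)
  · ext c
    simp [Module.Basis.toMatrix_apply, hb a rfl]

theorem diagonal_mem_unitaryGroup [DecidableEq S] {f : S → ℂ} (hf : ∀ b, ‖f b‖ = 1) :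
    diagonal f ∈ unitaryGroup S ℂ := by
  rw [mem_unitaryGroup_iff, star_eq_conjTranspose, diagonal_conjTranspose, diagonal_mul_diagonal,
    ← diagonal_one]
  congr 1
  funext b
  rw [Pi.star_apply, Complex.star_def, Complex.mul_conj', hf, Complex.ofReal_one, one_pow]

theorem exists_norm_eq_one_pow_ne {m n : ℕ} (h : m ≠ n) :
    ∃ z : ℂ, ‖z‖ = 1 ∧ z ^ m ≠ z ^ n := by
  have hζ := Complex.isPrimitiveRoot_exp (m + n + 1) (by omega)
  exact ⟨_, hζ.norm'_eq_one (by omega), fun hz => h (hζ.pow_inj (by omega) (by omega) hz)⟩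

end UnitVectors

section UnitaryInvariance

variable {ι S : Type*} [Fintype ι] [DecidableEq ι] [Fintype S] [DecidableEq S]
  {T : Matrix (ι → S) (ι → S) ℂ}
  (hT : ∀ U ∈ unitaryGroup S ℂ, kroneckerPow ι U * T * (kroneckerPow ι U)ᴴ = T)
include hT

theorem apply_eq_zero_of_unitary_invariant {i j : ι → S} (hij : wordContent i ≠ wordContent j) :
    T i j = 0 := by
  obtain ⟨a, ha⟩ : ∃ a, (wordContent i : Multiset S).count a ≠ (wordContent j).1.count a := by
    by_contra! hcount
    exact hij (Sym.coe_injective (Multiset.ext.2 hcount))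
  obtain ⟨z, hz, hpow⟩ := exists_norm_eq_one_pow_ne ha
  let f : S → ℂ := fun b => if b = a then z else 1
  have hf : diagonal f ∈ unitaryGroup S ℂ :=
    diagonal_mem_unitaryGroup fun b => by unfold f; split_ifs <;> simp [hz]
  have prod_f (l : ι → S) : ∏ t, f (l t) = z ^ (wordContent l : Multiset S).count a := by
    simp [f, Finset.prod_ite, count_wordContent, Fintype.card_subtype]
  have phase_mul : z ^ (wordContent i : Multiset S).count a * T i j *
      star z ^ (wordContent j : Multiset S).count a = T i j := by
    simpa only [kroneckerPow_diagonal, diagonal_conjTranspose, mul_diagonal, diagonal_mul,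
      Pi.star_apply, prod_f, star_pow] using congrFun₂ (hT _ hf) i j
  have star_pow_mul_pow : star z ^ (wordContent j : Multiset S).count a *
      z ^ (wordContent j : Multiset S).count a = 1 := by
    rw [← mul_pow, Complex.star_def, Complex.conj_mul', hz, Complex.ofReal_one, one_pow, one_pow]
  have sub_mul_eq_zero : (z ^ (wordContent i : Multiset S).count a -
      z ^ (wordContent j : Multiset S).count a) * T i j = 0 := by
    linear_combination z ^ (wordContent j : Multiset S).count a * phase_mul -
      z ^ (wordContent i : Multiset S).count a * T i j * star_pow_mul_pow
  exact (mul_eq_zero.1 sub_mul_eq_zero).resolve_left (sub_ne_zero.2 hpow)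

theorem exists_sum_eq_mul_dotProduct_pow [Nonempty S] :
    ∃ C, ∀ x : S → ℂ, ∑ i, ∑ j, (∏ t, x (i t)) * T i j * star (∏ t, x (j t)) =
      C * (star x ⬝ᵥ x) ^ Fintype.card ι := by
  let w : ι → S := fun _ => Classical.arbitrary S
  have unit_case {u : S → ℂ} (hu : star u ⬝ᵥ u = 1) :
      ∑ i, ∑ j, (∏ t, u (i t)) * T i j * star (∏ t, u (j t)) = T w w := by
    obtain ⟨U, hU, rfl⟩ := exists_unitaryGroup_row_eq (Classical.arbitrary S) hu
    conv_rhs => rw [← hT U hU]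
    simp only [mul_apply, conjTranspose_apply, kroneckerPow_apply, Finset.sum_mul, w]
    exact Finset.sum_comm
  refine ⟨T w w, fun x => ?_⟩
  obtain ⟨r, u, hu, rfl⟩ := exists_eq_smul_unit x
  rw [star_smul, smul_dotProduct, dotProduct_smul, hu, ← unit_case hu]
  simp only [Pi.smul_apply, smul_eq_mul, Finset.prod_mul_distrib, Finset.prod_const,
    Finset.card_univ, star_mul', star_pow, mul_one, mul_pow, Finset.sum_mul]
  refine Finset.sum_congr rfl fun i _ => Finset.sum_congr rfl fun j _ => ?_
  ring

theorem exists_rowSum_eq [Nonempty S]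
    (hperm : ∀ i j (σ τ : Equiv.Perm ι), T (i ∘ σ) (j ∘ τ) = T i j) :
    ∃ C, ∀ i, ∑ j, T i j = C := by
  obtain ⟨C, hC⟩ := exists_sum_eq_mul_dotProduct_pow hT
  refine ⟨C, fun i => sub_eq_zero.1 (congrFun (a := i) (eq_zero_of_sum_mul_prod_eq_zero
    ((Set.Ioi_infinite (0 : ℝ)).image Complex.ofReal_injective.injOn)
    (c := fun i => ∑ j, T i j - C) (fun i σ => ?_) fun y hy => ?_))⟩
  · exact congrArg (· - C) (Finset.sum_congr rfl fun j _ => hperm i j σ 1)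
  choose p hp hpy using hy
  -- On real vectors `x`, the quadratic form of `hC` is a polynomial in the squares `y b = x b ^ 2`.
  let x (b : S) : ℂ := √(p b)
  have x_sq (b : S) : x b * x b = y b := by
    rw [← Complex.ofReal_mul, Real.mul_self_sqrt (hp b).le, hpy]
  have star_x (b : S) : star (x b) = x b := Complex.conj_ofReal _
  have term_eq (i j : ι → S) :
      (∏ t, x (i t)) * T i j * star (∏ t, x (j t)) = T i j * ∏ t, y (i t) := by
    by_cases hij : wordContent i = wordContent j
    · have prod_x : ∏ t, x (i t) = ∏ t, x (j t) := by
        rw [← prod_map_wordContent, hij, prod_map_wordContent]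
      simp only [star_prod, star_x, ← x_sq, Finset.prod_mul_distrib, prod_x]
      ring
    · simp [apply_eq_zero_of_unitary_invariant hT hij]
  have norm_sq : star x ⬝ᵥ x = ∑ b, y b := by
    simp only [dotProduct, Pi.star_apply, star_x, x_sq]
  have sum_pow : (∑ b, y b) ^ Fintype.card ι = ∑ i : ι → S, ∏ t, y (i t) := by
    rw [← Fintype.prod_sum, Finset.prod_const, Finset.card_univ]
  have := hC x
  simp only [term_eq, norm_sq, sum_pow, ← Finset.sum_mul] at this
  simp only [sub_mul, Finset.sum_sub_distrib, this, Finset.mul_sum, sub_self]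

theorem trace_symmetrizer_smul_eq [Nonempty S]
    (hperm : ∀ i j (σ τ : Equiv.Perm ι), T (i ∘ σ) (j ∘ τ) = T i j) :
    (symmetrizer ι S ℂ).trace • T = T.trace • symmetrizer ι S ℂ := by
  obtain ⟨C, hC⟩ := exists_rowSum_eq hT hperm
  have hblock : IsContentBlock T := ⟨apply_eq_zero_of_unitary_invariant hT, hperm⟩
  let K : ℂ := (Fintype.card ι).factorial
  have proportional : K • T = C • symmetrizer ι S ℂ :=
    (hblock.smul K).ext_rowSum (isContentBlock_symmetrizer.smul C) fun i => by
      simp only [Matrix.smul_apply, smul_eq_mul, ← Finset.mul_sum, hC, sum_symmetrizer_apply, K]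
      exact mul_comm _ _
  have trace_eq : K * T.trace = C * (symmetrizer ι S ℂ).trace := by
    simpa only [trace_smul, smul_eq_mul] using congrArg trace proportional
  have hK : K ≠ 0 := Nat.cast_ne_zero.2 (Nat.factorial_ne_zero _)
  apply smul_right_injective _ hK
  change K • _ = K • _
  rw [smul_comm, proportional, smul_smul, smul_smul, trace_eq, mul_comm]

end UnitaryInvariance

section EntrywiseIntegral

variable {Ω l m n : Type*} [MeasurableSpace Ω]

theorem measurable_matrix_iff {α : Type*} [MeasurableSpace α] {X : Ω → Matrix m n α} :
    Measurable X ↔ ∀ i j, Measurable fun ω => X ω i j :=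
  measurable_pi_iff.trans (forall_congr' fun _ => measurable_pi_iff)

theorem measurable_matrix_apply {α : Type*} [MeasurableSpace α] (i : m) (j : n) :
    Measurable fun M : Matrix m n α => M i j :=
  measurable_matrix_iff.1 measurable_id i j

/-- The expectation of a random matrix, taken entry by entry because matrices carry no global
norm. -/
noncomputable def entrywiseIntegral (μ : Measure Ω) (X : Ω → Matrix m n ℂ) : Matrix m n ℂ :=
  of fun i j => ∫ ω, X ω i j ∂μ

theorem entrywiseIntegral_apply (μ : Measure Ω) (X : Ω → Matrix m n ℂ) (i : m) (j : n) :
    entrywiseIntegral μ X i j = ∫ ω, X ω i j ∂μ :=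
  rfl

theorem trace_entrywiseIntegral [Fintype n] {μ : Measure Ω} {X : Ω → Matrix n n ℂ}
    (hX : ∀ i j, Integrable (fun ω => X ω i j) μ) :
    (entrywiseIntegral μ X).trace = ∫ ω, (X ω).trace ∂μ :=
  (integral_finsetSum _ fun i _ => hX i i).symm

theorem mul_entrywiseIntegral_mul {p : Type*} [Fintype m] [Fintype n] {μ : Measure Ω}
    {X : Ω → Matrix m n ℂ} (hX : ∀ i j, Integrable (fun ω => X ω i j) μ)
    (A : Matrix l m ℂ) (B : Matrix n p ℂ) :
    A * entrywiseIntegral μ X * B = entrywiseIntegral μ fun ω => A * X ω * B := by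
  ext i j
  have hAX (b : n) : Integrable (fun ω => ∑ a, A i a * X ω a b) μ :=
    integrable_finsetSum _ fun a _ => (hX a b).const_mul (A i a)
  simp only [Matrix.mul_apply, entrywiseIntegral_apply]
  rw [integral_finsetSum _ fun b _ => (hAX b).mul_const (B b j)]
  simp only [integral_mul_const, integral_finsetSum _ fun a _ => (hX a _).const_mul (A i a),
    integral_const_mul]

theorem identDistrib_comp_of_measurePreserving {E : Type*} [MeasurableSpace E] {μ : Measure Ω}
    {f : Ω → Ω} (hf : MeasurePreserving f μ μ) {X : Ω → E} (hX : Measurable X) :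
    IdentDistrib X (X ∘ f) μ μ where
  aemeasurable_fst := hX.aemeasurable
  aemeasurable_snd := (hX.comp hf.measurable).aemeasurable
  map_eq := by rw [← Measure.map_map hX hf.measurable, hf.map_eq]

end EntrywiseIntegral

section NormalizedKroneckerPower

variable {S K : Type*} [Fintype S] {k : ℕ}

/-- The operator `q (|φ⟩⟨φ|)^{⊗k}` attached to the unnormalized state `M = q |φ⟩⟨φ|`, so that
`q = Tr M`. At `Tr M = 0` its value is `0` for `1 < k` because of the convention `0⁻¹ = 0`. -/
def normalizedKroneckerPow [Field K] (k : ℕ) (M : Matrix S S K) :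
    Matrix (Fin k → S) (Fin k → S) K :=
  (M.trace ^ (k - 1))⁻¹ • kroneckerPow (Fin k) M

theorem inv_pow_pred_mul_pow [GroupWithZero K] (hk : 0 < k) (a : K) :
    (a ^ (k - 1))⁻¹ * a ^ k = a := by
  rcases eq_or_ne a 0 with rfl | ha
  · rw [zero_pow hk.ne', mul_zero]
  · rw [← pow_sub_one_mul hk.ne' a, inv_mul_cancel_left₀ (pow_ne_zero _ ha)]

theorem trace_normalizedKroneckerPow [Field K] (hk : 0 < k) (M : Matrix S S K) :
    (normalizedKroneckerPow k M).trace = M.trace := by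
  rw [normalizedKroneckerPow, trace_smul, trace_kroneckerPow, Fintype.card_fin, smul_eq_mul,
    inv_pow_pred_mul_pow hk]

theorem norm_normalizedKroneckerPow_apply_le [NormedField K] (hk : 0 < k) {M : Matrix S S K}
    (hM : ∀ a b, ‖M a b‖ ≤ ‖M.trace‖) (i j : Fin k → S) :
    ‖normalizedKroneckerPow k M i j‖ ≤ ‖M.trace‖ := by
  have prod_le : ‖∏ t, M (i t) (j t)‖ ≤ ‖M.trace‖ ^ k := by
    rw [norm_prod]
    exact (Finset.prod_le_prod (fun _ _ => norm_nonneg _) fun t _ => hM (i t) (j t)).trans_eq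
      (by simp)
  calc ‖normalizedKroneckerPow k M i j‖
      = (‖M.trace‖ ^ (k - 1))⁻¹ * ‖∏ t, M (i t) (j t)‖ := by
        rw [normalizedKroneckerPow, Matrix.smul_apply, kroneckerPow_apply, norm_smul, norm_inv,
          norm_pow]
    _ ≤ (‖M.trace‖ ^ (k - 1))⁻¹ * ‖M.trace‖ ^ k := by gcongr
    _ = ‖M.trace‖ := inv_pow_pred_mul_pow hk _

theorem normalizedKroneckerPow_conj [DecidableEq S] [Field K] [StarRing K] {V : Matrix S S K}
    (hV : V ∈ unitaryGroup S K) (M : Matrix S S K) :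
    normalizedKroneckerPow k (V * M * Vᴴ) =
      kroneckerPow (Fin k) V * normalizedKroneckerPow k M * (kroneckerPow (Fin k) V)ᴴ := by
  have trace_conj : (V * M * Vᴴ).trace = M.trace := by
    rw [trace_mul_cycle, ← star_eq_conjTranspose, mem_unitaryGroup_iff'.1 hV, one_mul]
  simp only [normalizedKroneckerPow, trace_conj, kroneckerPow_mul, kroneckerPow_conjTranspose,
    Matrix.mul_smul, Matrix.smul_mul]

theorem measurable_normalizedKroneckerPow :
    Measurable (normalizedKroneckerPow k : Matrix S S ℂ → _) := by
  refine measurable_matrix_iff.2 fun i j => ?_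
  simp only [normalizedKroneckerPow, Matrix.smul_apply, kroneckerPow_apply, smul_eq_mul]
  refine ((Finset.measurable_sum _ fun a _ => ?_).pow_const _).inv.mul
    (Finset.measurable_prod _ fun t _ => ?_)
  exacts [measurable_matrix_apply a a, measurable_matrix_apply (i t) (j t)]

end NormalizedKroneckerPower

section TomographicEnsemble

variable {S A M : Type*} [DecidableEq S] [Fintype S] [Fintype A]

/-- The matrix of the embedding `I_S ⊗ |ψ⟩` of the system into system and ancilla. -/
def ancillaEmbedding (S : Type*) [DecidableEq S] (ψ : A → ℂ) : Matrix (S × A) S ℂ :=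
  of fun p j => if p.1 = j then ψ p.2 else 0

theorem mul_ancillaEmbedding_apply (ψ : A → ℂ) (U : Matrix M (S × A) ℂ) (m : M) (j : S) :
    (U * ancillaEmbedding S ψ) m j = ∑ b, U m (j, b) * ψ b := by
  simp [Matrix.mul_apply, ancillaEmbedding, Fintype.sum_prod_type]

theorem ancillaEmbedding_conjTranspose_mul_self {ψ : A → ℂ} (hψ : star ψ ⬝ᵥ ψ = 1) :
    (ancillaEmbedding S ψ)ᴴ * ancillaEmbedding S ψ = (1 : Matrix S S ℂ) := by
  ext i j
  rw [mul_ancillaEmbedding_apply]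
  rcases eq_or_ne j i with rfl | h
  · simpa [ancillaEmbedding, dotProduct] using hψ
  · simp [ancillaEmbedding, h, h.symm]

theorem kronecker_one_mul_ancillaEmbedding [DecidableEq A] (ψ : A → ℂ) (V : Matrix S S ℂ) :
    (V ⊗ₖ (1 : Matrix A A ℂ)) * ancillaEmbedding S ψ = ancillaEmbedding S ψ * V := by
  ext p j
  rw [mul_ancillaEmbedding_apply]
  simp [Matrix.mul_apply, ancillaEmbedding, one_apply, mul_comm]

/-- The operator `F_m = (I_S ⊗ ⟨ψ|) U† |m⟩⟨m| U (I_S ⊗ |ψ⟩)` of the measurement induced on the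
system by measuring `U (· ⊗ |ψ⟩)` in the computational basis. -/
def povmOperator (ψ : A → ℂ) (U : Matrix M (S × A) ℂ) (m : M) : Matrix S S ℂ :=
  vecMulVec (star ((U * ancillaEmbedding S ψ) m)) ((U * ancillaEmbedding S ψ) m)

theorem povmOperator_apply (ψ : A → ℂ) (U : Matrix M (S × A) ℂ) (m : M) (i j : S) :
    povmOperator ψ U m i j = conj (∑ b, U m (i, b) * ψ b) * ∑ b, U m (j, b) * ψ b := by
  simp only [povmOperator, vecMulVec_apply, Pi.star_apply, mul_ancillaEmbedding_apply,
    starRingEnd_apply]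

theorem povmOperator_mul_kronecker_one [DecidableEq A] (ψ : A → ℂ) (U : Matrix M (S × A) ℂ) (m : M)
    (V : Matrix S S ℂ) :
    povmOperator ψ (U * (Vᴴ ⊗ₖ (1 : Matrix A A ℂ))) m = V * povmOperator ψ U m * Vᴴ := by
  have row_eq : (U * (Vᴴ ⊗ₖ (1 : Matrix A A ℂ)) * ancillaEmbedding S ψ) m =
      (U * ancillaEmbedding S ψ) m ᵥ* Vᴴ := by
    rw [Matrix.mul_assoc, kronecker_one_mul_ancillaEmbedding, ← Matrix.mul_assoc]
    rfl
  rw [povmOperator, row_eq, star_vecMul, conjTranspose_conjTranspose, povmOperator, mul_vecMulVec,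
    vecMulVec_mul]

theorem trace_povmOperator (ψ : A → ℂ) (U : Matrix M (S × A) ℂ) (m : M) :
    (povmOperator ψ U m).trace = (‖WithLp.toLp 2 ((U * ancillaEmbedding S ψ) m)‖ : ℂ) ^ 2 := by
  rw [povmOperator, trace_vecMulVec, star_dotProduct_self_eq_norm_sq]

theorem norm_povmOperator_apply_le (ψ : A → ℂ) (U : Matrix M (S × A) ℂ) (m : M) (a b : S) :
    ‖povmOperator ψ U m a b‖ ≤ ‖(povmOperator ψ U m).trace‖ := by
  rw [trace_povmOperator, povmOperator, vecMulVec_apply, Pi.star_apply, norm_mul, norm_star,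
    norm_pow, Complex.norm_real, norm_norm, sq]
  exact mul_le_mul (PiLp.norm_apply_le (WithLp.toLp 2 ((U * ancillaEmbedding S ψ) m)) a)
    (PiLp.norm_apply_le (WithLp.toLp 2 ((U * ancillaEmbedding S ψ) m)) b)
    (norm_nonneg _) (norm_nonneg _)

theorem measurable_povmOperator (ψ : A → ℂ) (m : M) :
    Measurable fun U : Matrix M (S × A) ℂ => povmOperator ψ U m := by
  have measurable_row (j : S) :
      Measurable fun U : Matrix M (S × A) ℂ => (U * ancillaEmbedding S ψ) m j := by
    simp only [mul_ancillaEmbedding_apply]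
    exact Finset.measurable_sum _ fun b _ => (measurable_matrix_apply m (j, b)).mul_const (ψ b)
  exact measurable_matrix_iff.2 fun i j =>
    (Complex.continuous_conj.measurable.comp (measurable_row i)).mul (measurable_row j)

theorem identDistrib_povmOperator [DecidableEq A]
    {μ : Measure (Matrix M (S × A) ℂ)} {V : Matrix S S ℂ}
    (hV : MeasurePreserving (fun U => U * (Vᴴ ⊗ₖ (1 : Matrix A A ℂ))) μ μ) (ψ : A → ℂ) (m : M) :
    IdentDistrib (fun U => povmOperator ψ U m) (fun U => V * povmOperator ψ U m * Vᴴ) μ μ := by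
  simp only [← povmOperator_mul_kronecker_one]
  exact identDistrib_comp_of_measurePreserving hV (measurable_povmOperator ψ m)

variable [Fintype M]

theorem sum_povmOperator [DecidableEq A] {ψ : A → ℂ} (hψ : star ψ ⬝ᵥ ψ = 1)
    {U : Matrix M (S × A) ℂ} (hU : Uᴴ * U = 1) : ∑ m, povmOperator ψ U m = 1 := by
  calc ∑ m, povmOperator ψ U m
      = (U * ancillaEmbedding S ψ)ᴴ * (U * ancillaEmbedding S ψ) := by
        ext i j
        rw [Matrix.sum_apply]
        rfl
    _ = (ancillaEmbedding S ψ)ᴴ * (Uᴴ * U) * ancillaEmbedding S ψ := by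
        simp only [conjTranspose_mul, Matrix.mul_assoc]
    _ = 1 := by rw [hU, Matrix.mul_one, ancillaEmbedding_conjTranspose_mul_self hψ]

theorem sum_trace_povmOperator [DecidableEq A] {ψ : A → ℂ} (hψ : star ψ ⬝ᵥ ψ = 1)
    {U : Matrix M (S × A) ℂ} (hU : Uᴴ * U = 1) :
    ∑ m, (povmOperator ψ U m).trace = Fintype.card S := by
  rw [← trace_sum, sum_povmOperator hψ hU, trace_one]

/-- The `k`-th moment `∑ m, q_m (|φ_m⟩⟨φ_m|)^{⊗k}` of the tomographic ensemble, where
`F_m = d_S q_m |φ_m⟩⟨φ_m|`. -/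
noncomputable def ensembleMoment (k : ℕ) (ψ : A → ℂ) (U : Matrix M (S × A) ℂ) :
    Matrix (Fin k → S) (Fin k → S) ℂ :=
  (Fintype.card S : ℂ)⁻¹ • ∑ m, normalizedKroneckerPow k (povmOperator ψ U m)

variable {k : ℕ}

theorem ensembleMoment_apply (ψ : A → ℂ) (U : Matrix M (S × A) ℂ) (i j : Fin k → S) :
    ensembleMoment k ψ U i j = (Fintype.card S : ℂ)⁻¹ *
      ∑ m, (∏ t, povmOperator ψ U m (i t) (j t)) / (povmOperator ψ U m).trace ^ (k - 1) := by
  simp only [ensembleMoment, normalizedKroneckerPow, Matrix.smul_apply, Matrix.sum_apply,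
    kroneckerPow_apply, smul_eq_mul, div_eq_inv_mul]

theorem ensembleMoment_apply_comp_comp (ψ : A → ℂ) (U : Matrix M (S × A) ℂ) (i j : Fin k → S)
    (σ τ : Equiv.Perm (Fin k)) :
    ensembleMoment k ψ U (i ∘ σ) (j ∘ τ) = ensembleMoment k ψ U i j := by
  simp only [ensembleMoment, normalizedKroneckerPow, povmOperator, Matrix.smul_apply,
    Matrix.sum_apply, kroneckerPow_vecMulVec_comp]

theorem ensembleMoment_mul_kronecker_one [DecidableEq A] (ψ : A → ℂ) (U : Matrix M (S × A) ℂ)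
    {V : Matrix S S ℂ} (hV : V ∈ unitaryGroup S ℂ) :
    ensembleMoment k ψ (U * (Vᴴ ⊗ₖ (1 : Matrix A A ℂ))) =
      kroneckerPow (Fin k) V * ensembleMoment k ψ U * (kroneckerPow (Fin k) V)ᴴ := by
  simp only [ensembleMoment, povmOperator_mul_kronecker_one, normalizedKroneckerPow_conj hV,
    Matrix.mul_smul, Matrix.smul_mul, Matrix.mul_sum, Matrix.sum_mul]

theorem trace_ensembleMoment [DecidableEq A] [Nonempty S] (hk : 0 < k) {ψ : A → ℂ}
    (hψ : star ψ ⬝ᵥ ψ = 1) {U : Matrix M (S × A) ℂ} (hU : Uᴴ * U = 1) :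
    (ensembleMoment k ψ U).trace = 1 := by
  simp only [ensembleMoment, trace_smul, trace_sum, trace_normalizedKroneckerPow hk,
    sum_trace_povmOperator hψ hU, smul_eq_mul]
  exact inv_mul_cancel₀ (Nat.cast_ne_zero.2 Fintype.card_ne_zero)

theorem norm_ensembleMoment_apply_le [DecidableEq A] (hk : 0 < k) {ψ : A → ℂ}
    (hψ : star ψ ⬝ᵥ ψ = 1) {U : Matrix M (S × A) ℂ} (hU : Uᴴ * U = 1) (i j : Fin k → S) :
    ‖ensembleMoment k ψ U i j‖ ≤ 1 := by
  have sum_norm_trace : ∑ m, ‖(povmOperator ψ U m).trace‖ = Fintype.card S := by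
    have h := sum_trace_povmOperator hψ hU
    simp only [trace_povmOperator, norm_pow, Complex.norm_real, norm_norm] at h ⊢
    exact_mod_cast h
  calc ‖ensembleMoment k ψ U i j‖
      = (Fintype.card S : ℝ)⁻¹ * ‖∑ m, normalizedKroneckerPow k (povmOperator ψ U m) i j‖ := by
        rw [ensembleMoment, Matrix.smul_apply, Matrix.sum_apply, norm_smul, norm_inv,
          Complex.norm_natCast]
    _ ≤ (Fintype.card S : ℝ)⁻¹ * ∑ m, ‖(povmOperator ψ U m).trace‖ := by
        gcongr
        exact norm_sum_le_of_le _ fun m _ =>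
          norm_normalizedKroneckerPow_apply_le hk (norm_povmOperator_apply_le ψ U m) i j
    _ ≤ 1 := by
        rw [sum_norm_trace]
        exact inv_mul_le_one

theorem measurable_ensembleMoment (ψ : A → ℂ) :
    Measurable (ensembleMoment k ψ : Matrix M (S × A) ℂ → Matrix (Fin k → S) _ ℂ) := by
  refine measurable_matrix_iff.2 fun i j => ?_
  simp only [ensembleMoment, Matrix.smul_apply, Matrix.sum_apply, smul_eq_mul]
  exact (Finset.measurable_sum _ fun m _ => (measurable_matrix_apply i j).comp
    (measurable_normalizedKroneckerPow.comp (measurable_povmOperator ψ m))).const_mul _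

variable [DecidableEq A] {μ : Measure (Matrix M (S × A) ℂ)}

theorem integrable_ensembleMoment_apply [IsFiniteMeasure μ] (hk : 0 < k)
    (hμsupp : ∀ᵐ U ∂μ, Uᴴ * U = 1) {ψ : A → ℂ} (hψ : star ψ ⬝ᵥ ψ = 1) (i j : Fin k → S) :
    Integrable (fun U => ensembleMoment k ψ U i j) μ :=
  .of_bound (measurable_matrix_iff.1 (measurable_ensembleMoment ψ) i j).aestronglyMeasurable 1
    (hμsupp.mono fun _ hU => norm_ensembleMoment_apply_le hk hψ hU i j)

theorem entrywiseIntegral_ensembleMoment_conj {V : Matrix S S ℂ} (hVmem : V ∈ unitaryGroup S ℂ)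
    (hV : MeasurePreserving (fun U => U * (Vᴴ ⊗ₖ (1 : Matrix A A ℂ))) μ μ) {ψ : A → ℂ}
    (hint : ∀ i j, Integrable (fun U => ensembleMoment k ψ U i j) μ) :
    kroneckerPow (Fin k) V * entrywiseIntegral μ (ensembleMoment k ψ) * (kroneckerPow (Fin k) V)ᴴ =
      entrywiseIntegral μ (ensembleMoment k ψ) := by
  rw [mul_entrywiseIntegral_mul hint]
  simp only [← ensembleMoment_mul_kronecker_one ψ _ hVmem]
  ext i j
  exact (identDistrib_comp_of_measurePreserving hV
    (measurable_matrix_iff.1 (measurable_ensembleMoment ψ) i j)).integral_eq.symm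

theorem entrywiseIntegral_ensembleMoment [Nonempty S] [IsProbabilityMeasure μ] (hk : 0 < k)
    (hμinv : ∀ V ∈ unitaryGroup S ℂ,
      MeasurePreserving (fun U => U * (Vᴴ ⊗ₖ (1 : Matrix A A ℂ))) μ μ)
    (hμsupp : ∀ᵐ U ∂μ, Uᴴ * U = 1) {ψ : A → ℂ} (hψ : star ψ ⬝ᵥ ψ = 1) :
    entrywiseIntegral μ (ensembleMoment k ψ) =
      (∏ t ∈ Finset.range k, ((Fintype.card S : ℂ) + t))⁻¹ • symmetrizer (Fin k) S ℂ := by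
  have hint := integrable_ensembleMoment_apply (S := S) hk hμsupp hψ
  have trace_eq_one : (entrywiseIntegral μ (ensembleMoment k ψ)).trace = 1 := by
    rw [trace_entrywiseIntegral hint,
      integral_congr_ae (hμsupp.mono fun U hU => trace_ensembleMoment hk hψ hU)]
    simp
  have trace_smul_eq := trace_symmetrizer_smul_eq
    (fun V hV => entrywiseIntegral_ensembleMoment_conj hV (hμinv V hV) hint)
    fun i j σ τ => by simp only [entrywiseIntegral_apply, ensembleMoment_apply_comp_comp]
  rw [trace_eq_one, one_smul, trace_symmetrizer, Fintype.card_fin] at trace_smul_eq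
  have prod_ne_zero : ∏ t ∈ Finset.range k, ((Fintype.card S : ℂ) + t) ≠ 0 := by
    have : Fintype.card S ≠ 0 := Fintype.card_ne_zero
    exact Finset.prod_ne_zero_iff.2 fun t _ => by exact_mod_cast (by omega)
  rw [← trace_smul_eq, inv_smul_smul₀ prod_ne_zero]

end TomographicEnsemble

theorem haar_average_moments_general {S A M : Type*} [Fintype S] [DecidableEq S] [Nonempty S]
    [Fintype A] [DecidableEq A] [Fintype M] {k : ℕ} (hk : 0 < k)
    (μ : Measure (Matrix M (S × A) ℂ)) [IsProbabilityMeasure μ]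
    (hμinv : ∀ V ∈ unitaryGroup S ℂ,
      MeasurePreserving (fun U => U * (Vᴴ ⊗ₖ (1 : Matrix A A ℂ))) μ μ)
    (hμsupp : ∀ᵐ U ∂μ, Uᴴ * U = 1) (ψ : A → ℂ) (hψ : star ψ ⬝ᵥ ψ = 1) :
    (∀ V ∈ unitaryGroup S ℂ, ∀ m,
      IdentDistrib (fun U => povmOperator ψ U m) (fun U => V * povmOperator ψ U m * Vᴴ) μ μ) ∧
    entrywiseIntegral μ (ensembleMoment k ψ) =
      (∏ t ∈ Finset.range k, ((Fintype.card S : ℂ) + t))⁻¹ • symmetrizer (Fin k) S ℂ :=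
  ⟨fun V hV m => identDistrib_povmOperator (hμinv V hV) ψ m,
    entrywiseIntegral_ensembleMoment hk hμinv hμsupp hψ⟩

theorem sum_permOp (dS k : ℕ) :
    ∑ σ : Equiv.Perm (Fin k), permOp dS k σ = symmetrizer (Fin k) (Fin dS) ℂ := by
  ext i j
  rw [Matrix.sum_apply]
  rfl

/-- for `U` Haar-random on `U(2^N)` (`N = N_S + N_A`), the distribution of
the tomographic-ensemble states `|φ_m⟩` (equivalently, of the operators `F_m`, at fixed
weights `q_m = Tr[F_m]/d_S`) is invariant under every unitary `U_S` on `H_S`; consequently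
`𝔼_U ∑_m q_m (|φ_m⟩⟨φ_m|)^{⊗k} = (∑_{σ∈S_k} π_σ)/(d_S(d_S+1)⋯(d_S+k−1))`, the `k`-th
moment of the Haar ensemble. -/
theorem haar_average_moments
    (dS dA k : ℕ) (hdS : 0 < dS) (hk : 0 < k)
    -- a probability measure on matrices, right-invariant and supported on the unitary group
    (μ : Measure (Matrix (Fin dS × Fin dA) (Fin dS × Fin dA) ℂ))
    (hμprob : IsProbabilityMeasure μ)
    (hμinv : ∀ W ∈ Matrix.unitaryGroup (Fin dS × Fin dA) ℂ,
      MeasurePreserving (fun U => U * W) μ μ)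
    (hμsupp : ∀ᵐ U ∂μ, U ∈ Matrix.unitaryGroup (Fin dS × Fin dA) ℂ)
    -- the ancilla initial state, a unit vector
    (ψ : Fin dA → ℂ) (hψ : ∑ a, conj (ψ a) * ψ a = 1)
    -- the (unnormalized) POVM operators `F_m(U) = (I_S ⊗ ⟨0|_A) U† |m⟩⟨m| U (I_S ⊗ |0⟩_A)`
    (F : Matrix (Fin dS × Fin dA) (Fin dS × Fin dA) ℂ → (Fin dS × Fin dA) →
      Matrix (Fin dS) (Fin dS) ℂ)
    (hF : ∀ U m j j', F U m j j' =
      conj (∑ b, U m (j, b) * ψ b) * (∑ b, U m (j', b) * ψ b))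
    -- `U_S† ⊗ I_A` as a matrix on the full space, for a unitary `U_S` on the system
    (W : Matrix (Fin dS) (Fin dS) ℂ → Matrix (Fin dS × Fin dA) (Fin dS × Fin dA) ℂ)
    (hW : ∀ US p q, W US p q = if p.2 = q.2 then USᴴ p.1 q.1 else 0)
    -- `k`-th moment of the tomographic ensemble, `∑_m q_m (|φ_m⟩⟨φ_m|)^{⊗k}`
    (moment : Matrix (Fin dS × Fin dA) (Fin dS × Fin dA) ℂ →
      Matrix (Fin k → Fin dS) (Fin k → Fin dS) ℂ)
    (hmoment : ∀ U i j, moment U i j =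
      (dS : ℂ)⁻¹ * ∑ m, (∏ t, F U m (i t) (j t)) / ((F U m).trace) ^ (k - 1)) :
    -- (a) the Haar measure is preserved by `U ↦ U (U_S† ⊗ I_A)`
    ((∀ US ∈ Matrix.unitaryGroup (Fin dS) ℂ, MeasurePreserving (fun U => U * W US) μ μ)
    -- (b) at fixed weights, the distribution of the `F_m` is invariant under `U_S`-rotations
    ∧ (∀ US ∈ Matrix.unitaryGroup (Fin dS) ℂ, ∀ m,
        ∀ h : Matrix (Fin dS) (Fin dS) ℂ → ℂ, Measurable h →
          ∫ U, h (F U m) ∂μ = ∫ U, h (US * F U m * USᴴ) ∂μ)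
    -- (c) consequently the averaged moment equals the Haar-ensemble `k`-th moment
    ∧ (∀ i j, ∫ U, moment U i j ∂μ =
        ((∑ σ : Equiv.Perm (Fin k), permOp dS k σ) i j)
          / ∏ t ∈ Finset.range k, ((dS : ℂ) + (t : ℂ)))) := by
  have : Nonempty (Fin dS) := ⟨⟨0, hdS⟩⟩
  obtain rfl : F = povmOperator ψ := by
    ext U m i j
    rw [hF, povmOperator_apply]
  obtain rfl : W = fun V => Vᴴ ⊗ₖ 1 := by
    ext V p q
    rw [hW, kroneckerMap_apply, one_apply, mul_ite, mul_one, mul_zero]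
  obtain rfl : moment = ensembleMoment k ψ := by
    ext U i j
    rw [hmoment, ensembleMoment_apply, Fintype.card_fin]
  have local_invariant (V) (hV : V ∈ unitaryGroup (Fin dS) ℂ) :
      MeasurePreserving (fun U => U * (Vᴴ ⊗ₖ (1 : Matrix (Fin dA) (Fin dA) ℂ))) μ μ :=
    hμinv _ (kronecker_mem_unitary (Unitary.star_mem hV) (one_mem _))
  obtain ⟨rotation_invariant, average_eq⟩ := haar_average_moments_general hk μ local_invariant
    (hμsupp.mono fun U hU => mem_unitaryGroup_iff'.1 hU) ψ hψ
  refine ⟨local_invariant, fun V hV m h hh => ((rotation_invariant V hV m).comp hh).integral_eq,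
    fun i j => ?_⟩
  rw [← entrywiseIntegral_apply, average_eq, sum_permOp, Fintype.card_fin, Matrix.smul_apply,
    smul_eq_mul, div_eq_inv_mul]
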